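/- For each positive integer n, the sum over all binary trees T with n vertices of f^T · ∏_{v ∈ T} 1/2^{h_v - 1} equals 1, where f^T is the number of increasing labelings of T and h_v is the hook length of v. -/

import Mathlib

/-- A binary tree: `nil` is the empty tree, and a vertex may have an empty or
nonempty left subtree and an empty or nonempty right subtree.  The binary
trees with `n` vertices are the `T : BinTree` with `T.size = n`. -/
inductive BinTree : Type where
  | nil : BinTree
  | node (l r : BinTree) : BinTree
deriving DecidableEq

/-- The number of vertices of a binary tree. -/
def BinTree.size : BinTree → ℕ
  | .nil => 0
  | .node l r => l.size + r.size + 1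

/-- The product, over all vertices `v` of a binary tree, of `f h_v`, where
`h_v` is the hook length of `v` (the number of descendants of `v`, including
`v` itself). -/
def BinTree.hookProd (f : ℕ → ℝ) : BinTree → ℝ
  | .nil => 1
  | .node l r => f (l.size + r.size + 1) * l.hookProd f * r.hookProd f

/-- The vertices of a binary tree, encoded as paths from the root
(`false` = go to left child, `true` = go to right child). -/
def BinTree.positions : BinTree → List (List Bool)
  | .nil => []
  | .node l r =>
      [] :: (l.positions.map (fun p => false :: p) ++ r.positions.map (fun p => true :: p))

/-- The number `f^T` of increasing labelings of a binary tree `T`: bijections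
`ℓ` from the vertices of `T` to `{1, …, |T|}` (here `Fin T.size`) such that
`ℓ v < ℓ w` whenever `w` is a child of `v`. -/
noncomputable def BinTree.incLabelings (T : BinTree) : ℕ :=
  Nat.card {ℓ : {p // p ∈ T.positions} → Fin T.size //
    Function.Bijective ℓ ∧
    ∀ v w : {p // p ∈ T.positions}, (∃ b, (w : List Bool) = (v : List Bool) ++ [b]) → ℓ v < ℓ w}

namespace BinTree

/-- Increasing bijective labelings with labels in `α`. -/
def Lab (T : BinTree) (α : Type) [LT α] : Type :=
  {ℓ : {p // p ∈ T.positions} → α //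
    Function.Bijective ℓ ∧
    ∀ v w : {p // p ∈ T.positions}, (∃ b, (w : List Bool) = (v : List Bool) ++ [b]) → ℓ v < ℓ w}

theorem mem_left {l r : BinTree} {p : List Bool} :
    false :: p ∈ (node l r).positions ↔ p ∈ l.positions := by
  simp [positions]

theorem mem_right {l r : BinTree} {p : List Bool} :
    true :: p ∈ (node l r).positions ↔ p ∈ r.positions := by
  simp [positions]

theorem mem_nil {l r : BinTree} : [] ∈ (node l r).positions := by
  simp [positions]

theorem prefix_mem (T : BinTree) : ∀ (p : List Bool) (b : Bool),
    p ++ [b] ∈ T.positions → p ∈ T.positions := by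
  induction T with
  | nil => intro p b h; simp [positions] at h
  | node l r ihl ihr =>
    intro p b h
    rcases p with _ | ⟨c, p⟩
    · exact mem_nil
    · cases c
      · rw [List.cons_append, mem_left] at h
        exact mem_left.2 (ihl _ _ h)
      · rw [List.cons_append, mem_right] at h
        exact mem_right.2 (ihr _ _ h)

theorem nodup_positions (T : BinTree) : T.positions.Nodup := by
  induction T with
  | nil => simp [positions]
  | node l r ihl ihr =>
    rw [positions, List.nodup_cons, List.nodup_append]
    refine ⟨by simp, ihl.map (fun a b h => by simpa using h),
      ihr.map (fun a b h => by simpa using h), ?_⟩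
    intro a ha b hb
    simp only [List.mem_map] at ha hb
    obtain ⟨a, _, rfl⟩ := ha
    obtain ⟨b, _, rfl⟩ := hb
    simp

theorem length_positions (T : BinTree) : T.positions.length = T.size := by
  induction T with
  | nil => rfl
  | node l r ihl ihr => simp [positions, size, ihl, ihr]

theorem card_positions (T : BinTree) : Nat.card {p // p ∈ T.positions} = T.size := by
  have := Nat.card_congr (List.Nodup.getEquiv _ (nodup_positions T))
  rw [← this, Nat.card_fin, length_positions]

def labCongr (T : BinTree) {α β : Type} [LinearOrder α] [LinearOrder β] (e : α ≃o β) :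
    Lab T α ≃ Lab T β where
  toFun f := ⟨fun x => e (f.1 x), e.bijective.comp f.2.1,
    fun v w h => e.lt_iff_lt.2 (f.2.2 v w h)⟩
  invFun f := ⟨fun x => e.symm (f.1 x), e.symm.bijective.comp f.2.1,
    fun v w h => e.symm.lt_iff_lt.2 (f.2.2 v w h)⟩
  left_inv f := Subtype.ext (by funext x; simp)
  right_inv f := Subtype.ext (by funext x; simp)

theorem card_lab {n : ℕ} (T : BinTree) (A : Finset (Fin n)) :
    Nat.card (Lab T {i // i ∈ A}) = if A.card = T.size then T.incLabelings else 0 := by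
  split_ifs with h
  · exact (Nat.card_congr (labCongr T (A.orderIsoOfFin h))).symm
  · have : IsEmpty (Lab T {i // i ∈ A}) := by
      refine ⟨fun f => h ?_⟩
      have := Nat.card_congr (Equiv.ofBijective f.1 f.2.1)
      rw [card_positions] at this
      simpa using this.symm
    exact Nat.card_of_isEmpty

theorem lab_root {l r : BinTree} {n : ℕ} (f : Lab (node l r) (Fin (n + 1))) :
    f.1 ⟨[], mem_nil⟩ = 0 := by
  have key : ∀ (p : List Bool) (hp : p ∈ (node l r).positions),
      f.1 ⟨[], mem_nil⟩ ≤ f.1 ⟨p, hp⟩ := by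
    intro p
    induction p using List.reverseRecOn with
    | nil => intro _; exact le_rfl
    | append_singleton p b ih =>
      intro hp
      exact (ih (prefix_mem _ _ _ hp)).trans (f.2.2 ⟨p, prefix_mem _ _ _ hp⟩ _ ⟨b, rfl⟩).le
  obtain ⟨⟨p, hp⟩, h⟩ := f.2.1.2 0
  have := key p hp
  rw [h] at this
  exact le_antisymm this (Fin.zero_le _)

theorem lab_ne_zero {l r : BinTree} {n : ℕ} (f : Lab (node l r) (Fin (n + 1))) (c : Bool)
    (p : List Bool) (hp : c :: p ∈ (node l r).positions) : f.1 ⟨c :: p, hp⟩ ≠ 0 := by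
  intro h
  have := f.2.1.1 (h.trans (lab_root f).symm)
  simp at this

open Classical in
/-- The set of labels used on the left subtree (shifted). -/
noncomputable def leftSet {l r : BinTree} {n : ℕ} (f : Lab (node l r) (Fin (n + 1))) :
    Finset (Fin n) :=
  Finset.univ.filter fun i => ∃ p, ∃ hp : false :: p ∈ (node l r).positions,
    f.1 ⟨false :: p, hp⟩ = i.succ

theorem mem_leftSet {l r : BinTree} {n : ℕ} (f : Lab (node l r) (Fin (n + 1))) (i : Fin n) :
    i ∈ leftSet f ↔ ∃ p, ∃ hp : false :: p ∈ (node l r).positions,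
    f.1 ⟨false :: p, hp⟩ = i.succ := by
  simp [leftSet]

theorem mem_leftSet_compl {l r : BinTree} {n : ℕ} (f : Lab (node l r) (Fin (n + 1))) (i : Fin n) :
    i ∈ (leftSet f)ᶜ ↔ ∃ p, ∃ hp : true :: p ∈ (node l r).positions,
    f.1 ⟨true :: p, hp⟩ = i.succ := by
  rw [Finset.mem_compl, mem_leftSet]
  constructor
  · intro h
    obtain ⟨⟨p, hp⟩, e⟩ := f.2.1.2 i.succ
    rcases p with _ | ⟨c, p⟩
    · rw [lab_root] at e
      exact absurd e.symm (Fin.succ_ne_zero i)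
    · cases c
      · exact absurd ⟨p, hp, e⟩ h
      · exact ⟨p, hp, e⟩
  · rintro ⟨p, hp, e⟩ ⟨q, hq, e'⟩
    have := f.2.1.1 (e.trans e'.symm)
    simp at this

/-- Gluing two labelings. -/
def glueFun {l r : BinTree} {n : ℕ} {A : Finset (Fin n)}
    (g : Lab l {i // i ∈ A}) (h : Lab r {i // i ∈ Aᶜ}) :
    {p // p ∈ (node l r).positions} → Fin (n + 1)
  | ⟨[], _⟩ => 0
  | ⟨false :: p, hp⟩ => (g.1 ⟨p, mem_left.1 hp⟩).1.succ
  | ⟨true :: p, hp⟩ => (h.1 ⟨p, mem_right.1 hp⟩).1.succ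

theorem glue_bij {l r : BinTree} {n : ℕ} {A : Finset (Fin n)}
    (g : Lab l {i // i ∈ A}) (h : Lab r {i // i ∈ Aᶜ}) : Function.Bijective (glueFun g h) := by
  constructor
  · rintro ⟨p, hp⟩ ⟨q, hq⟩ e
    rcases p with _ | ⟨_ | _, p⟩ <;> rcases q with _ | ⟨_ | _, q⟩ <;>
      simp only [glueFun, Fin.succ_inj] at e
    · rfl
    · exact absurd e.symm (Fin.succ_ne_zero _)
    · exact absurd e.symm (Fin.succ_ne_zero _)
    · exact absurd e (Fin.succ_ne_zero _)
    · have := g.2.1.1 (Subtype.ext e)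
      simp only [Subtype.mk.injEq] at this
      subst this; rfl
    · have h1 := (g.1 ⟨p, mem_left.1 hp⟩).2
      rw [e] at h1
      exact absurd h1 (Finset.mem_compl.1 (h.1 ⟨q, mem_right.1 hq⟩).2)
    · exact absurd e (Fin.succ_ne_zero _)
    · have h1 := (g.1 ⟨q, mem_left.1 hq⟩).2
      rw [← e] at h1
      exact absurd h1 (Finset.mem_compl.1 (h.1 ⟨p, mem_right.1 hp⟩).2)
    · have := h.2.1.1 (Subtype.ext e)
      simp only [Subtype.mk.injEq] at this
      subst this; rfl
  · intro i
    refine Fin.cases ⟨⟨[], mem_nil⟩, rfl⟩ (fun i => ?_) i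
    by_cases hi : i ∈ A
    · obtain ⟨⟨p, hp⟩, e⟩ := g.2.1.2 ⟨i, hi⟩
      exact ⟨⟨false :: p, mem_left.2 hp⟩, by simp only [glueFun, e]⟩
    · obtain ⟨⟨p, hp⟩, e⟩ := h.2.1.2 ⟨i, Finset.mem_compl.2 hi⟩
      exact ⟨⟨true :: p, mem_right.2 hp⟩, by simp only [glueFun, e]⟩

/-- Gluing two labelings, as a labeling. -/
def glue {l r : BinTree} {n : ℕ} {A : Finset (Fin n)}
    (g : Lab l {i // i ∈ A}) (h : Lab r {i // i ∈ Aᶜ}) : Lab (node l r) (Fin (n + 1)) :=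
  ⟨glueFun g h, glue_bij g h, by
    rintro ⟨p, hp⟩ ⟨q, hq⟩ ⟨b, e⟩
    simp only at e
    subst e
    rcases p with _ | ⟨_ | _, p⟩
    · cases b <;> exact Fin.succ_pos _
    · exact Fin.succ_lt_succ_iff.2 (g.2.2 ⟨p, _⟩ ⟨p ++ [b], _⟩ ⟨b, rfl⟩)
    · exact Fin.succ_lt_succ_iff.2 (h.2.2 ⟨p, _⟩ ⟨p ++ [b], _⟩ ⟨b, rfl⟩)⟩

theorem leftSet_glue {l r : BinTree} {n : ℕ} {A : Finset (Fin n)}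
    (g : Lab l {i // i ∈ A}) (h : Lab r {i // i ∈ Aᶜ}) : leftSet (glue g h) = A := by
  ext i
  rw [mem_leftSet]
  constructor
  · rintro ⟨p, hp, e⟩
    have e' : (g.1 ⟨p, mem_left.1 hp⟩).1 = i := Fin.succ_injective _ e
    rw [← e']
    exact (g.1 ⟨p, mem_left.1 hp⟩).2
  · intro hi
    obtain ⟨⟨p, hp⟩, e⟩ := g.2.1.2 ⟨i, hi⟩
    exact ⟨p, mem_left.2 hp, by simp only [glue, glueFun, e]⟩

/-- The fibre of `leftSet`. -/
noncomputable def fiberEquiv (l r : BinTree) (n : ℕ) (A : Finset (Fin n)) :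
    {f : Lab (node l r) (Fin (n + 1)) // leftSet f = A} ≃
      Lab l {i // i ∈ A} × Lab r {i // i ∈ Aᶜ} where
  toFun f :=
    (⟨fun p => ⟨(f.1.1 ⟨false :: p.1, mem_left.2 p.2⟩).pred (lab_ne_zero _ _ _ _), by
        refine (Finset.ext_iff.1 (congrArg (fun B => B) f.2) _).1 ((mem_leftSet f.1 _).2 ?_)
        exact ⟨p.1, mem_left.2 p.2, by simp⟩⟩, by
      refine ⟨⟨?_, ?_⟩, ?_⟩
      · intro p q e
        simp only [Subtype.mk.injEq, Fin.pred_inj] at e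
        have := f.1.2.1.1 e
        simpa [Subtype.ext_iff] using this
      · rintro ⟨i, hi⟩
        have hi' := hi
        rw [← f.2, mem_leftSet] at hi'
        obtain ⟨p, hp, e⟩ := hi'
        exact ⟨⟨p, mem_left.1 hp⟩, by simp [e]⟩
      · rintro v w ⟨b, e⟩
        refine Subtype.mk_lt_mk.2 (Fin.pred_lt_pred_iff.2 (f.1.2.2 _ _ ⟨b, ?_⟩))
        simp [e]⟩,
     ⟨fun p => ⟨(f.1.1 ⟨true :: p.1, mem_right.2 p.2⟩).pred (lab_ne_zero _ _ _ _), by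
        refine (Finset.ext_iff.1 (congrArg (fun B => Bᶜ) f.2) _).1 ((mem_leftSet_compl f.1 _).2 ?_)
        exact ⟨p.1, mem_right.2 p.2, by simp⟩⟩, by
      refine ⟨⟨?_, ?_⟩, ?_⟩
      · intro p q e
        simp only [Subtype.mk.injEq, Fin.pred_inj] at e
        have := f.1.2.1.1 e
        simpa [Subtype.ext_iff] using this
      · rintro ⟨i, hi⟩
        have hi' := hi
        rw [← f.2, mem_leftSet_compl] at hi'
        obtain ⟨p, hp, e⟩ := hi'
        exact ⟨⟨p, mem_right.1 hp⟩, by simp [e]⟩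
      · rintro v w ⟨b, e⟩
        refine Subtype.mk_lt_mk.2 (Fin.pred_lt_pred_iff.2 (f.1.2.2 _ _ ⟨b, ?_⟩))
        simp [e]⟩)
  invFun gh := ⟨glue gh.1 gh.2, leftSet_glue _ _⟩
  left_inv f := by
    apply Subtype.ext
    apply Subtype.ext
    funext ⟨p, hp⟩
    rcases p with _ | ⟨_ | _, p⟩
    · exact (lab_root f.1).symm
    · simp [glue, glueFun]
    · simp [glue, glueFun]
  right_inv gh := by
    refine Prod.ext (Subtype.ext ?_) (Subtype.ext ?_)
    · funext p
      simp [glue, glueFun]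
    · funext p
      simp [glue, glueFun]

theorem finite_lab (T : BinTree) (n : ℕ) : Finite (Lab T (Fin n)) := by
  have : Finite {p // p ∈ T.positions} := (List.finite_toSet T.positions).to_subtype
  unfold Lab
  infer_instance

theorem incLabelings_node (l r : BinTree) :
    (node l r).incLabelings =
      (l.size + r.size).choose l.size * (l.incLabelings * r.incLabelings) := by
  set n := l.size + r.size with hn
  have h0 : (node l r).incLabelings = Nat.card (Lab (node l r) (Fin (n + 1))) := rfl
  have := finite_lab (node l r) (n + 1)
  rw [h0, ← Nat.card_congr (Equiv.sigmaFiberEquiv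
    (leftSet : Lab (node l r) (Fin (n + 1)) → Finset (Fin n))), Nat.card_sigma]
  have h1 : ∀ A : Finset (Fin n),
      Nat.card {f : Lab (node l r) (Fin (n + 1)) // leftSet f = A} =
      if A.card = l.size then l.incLabelings * r.incLabelings else 0 := by
    intro A
    rw [Nat.card_congr (fiberEquiv l r n A), Nat.card_prod, card_lab, card_lab,
      Finset.card_compl, Fintype.card_fin]
    split_ifs with h1 h2 h2
    · rfl
    · omega
    · simp
    · simp
  rw [Finset.sum_congr rfl (fun A _ => h1 A), ← Finset.sum_filter, Finset.sum_const,
    smul_eq_mul]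
  congr 1
  have : (Finset.univ.filter fun A : Finset (Fin n) => A.card = l.size)
      = Finset.powersetCard l.size Finset.univ := by
    ext A; simp [Finset.mem_powersetCard]
  rw [this, Finset.card_powersetCard, Finset.card_univ, Fintype.card_fin]

theorem incLabelings_nil : nil.incLabelings = 1 := by
  have : IsEmpty {p // p ∈ nil.positions} := ⟨fun p => by simpa [positions] using p.2⟩
  have : IsEmpty (Fin nil.size) := by simp only [size]; infer_instance
  rw [incLabelings, Nat.card_eq_one_iff_unique]
  refine ⟨⟨fun a b => Subtype.ext (Subsingleton.elim _ _)⟩,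
    ⟨⟨fun p => isEmptyElim p, ⟨fun p => isEmptyElim p, fun p => isEmptyElim p⟩,
      fun p => isEmptyElim p⟩⟩⟩

/-- Decomposition of trees by their root. -/
def rootEquiv (n : ℕ) : {T : BinTree // T.size = n + 1} ≃
    Σ k : Fin (n + 1), {T : BinTree // T.size = k.1} × {T : BinTree // T.size = n - k.1} where
  toFun
    | ⟨node l r, h⟩ => ⟨⟨l.size, by simp only [size] at h; omega⟩, ⟨l, rfl⟩,
        ⟨r, by simp only [size] at h; simp only; omega⟩⟩
  invFun x := ⟨node x.2.1.1 x.2.2.1, by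
    have h1 := x.2.1.2
    have h2 := x.2.2.2
    have h3 := x.1.2
    simp only [size]; omega⟩
  left_inv := by
    rintro ⟨_ | ⟨l, r⟩, h⟩
    · simp [size] at h
    · rfl
  right_inv := by
    rintro ⟨⟨k, hk⟩, ⟨l, hl⟩, ⟨r, hr⟩⟩
    simp only at hl
    subst hl
    rfl

noncomputable def wt (T : BinTree) : ℝ :=
  (T.incLabelings : ℝ) * T.hookProd (fun h => 1 / (2 : ℝ) ^ (h - 1))

theorem wt_node (l r : BinTree) : (node l r).wt =
    (1 / 2 ^ (l.size + r.size)) * ((l.size + r.size).choose l.size) * (l.wt * r.wt) := by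
  simp only [wt, incLabelings_node, hookProd, Nat.add_sub_cancel]
  push_cast
  ring

theorem main_aux (n : ℕ) : Finite {T : BinTree // T.size = n} ∧
    ∑' T : {T : BinTree // T.size = n}, T.1.wt = 1 := by
  induction n using Nat.strong_induction_on with
  | _ n ih =>
  rcases n with _ | n
  · have : Unique {T : BinTree // T.size = 0} :=
      ⟨⟨⟨nil, rfl⟩⟩, by
        rintro ⟨_ | ⟨l, r⟩, h⟩
        · rfl
        · simp [size] at h⟩
    refine ⟨inferInstance, ?_⟩
    rw [tsum_fintype, Fintype.sum_eq_single (⟨nil, rfl⟩ : {T : BinTree // T.size = 0})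
      (fun x hx => absurd (Subsingleton.elim _ _) hx)]
    simp [wt, incLabelings_nil, hookProd]
  · have f1 : ∀ k : Fin (n + 1), Finite {T : BinTree // T.size = k.1} :=
      fun k => (ih k.1 k.2).1
    have f2 : ∀ k : Fin (n + 1), Finite {T : BinTree // T.size = n - k.1} :=
      fun k => (ih (n - k.1) (by omega)).1
    refine ⟨Finite.of_equiv _ (rootEquiv n).symm, ?_⟩
    have i1 : ∀ k : Fin (n + 1), Fintype {T : BinTree // T.size = k.1} :=
      fun k => Fintype.ofFinite _
    have i2 : ∀ k : Fin (n + 1), Fintype {T : BinTree // T.size = n - k.1} :=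
      fun k => Fintype.ofFinite _
    rw [← (rootEquiv n).symm.tsum_eq, tsum_fintype, Fintype.sum_sigma]
    have key : ∀ k : Fin (n + 1),
        ∑ y : {T : BinTree // T.size = k.1} × {T : BinTree // T.size = n - k.1},
          ((rootEquiv n).symm ⟨k, y⟩).1.wt = (1 / 2 ^ n) * (n.choose k.1 : ℝ) := by
      intro k
      have e1 := (ih k.1 k.2).2
      have e2 := (ih (n - k.1) (by omega)).2
      rw [tsum_fintype] at e1 e2
      have : ∀ y : {T : BinTree // T.size = k.1} × {T : BinTree // T.size = n - k.1},
          ((rootEquiv n).symm ⟨k, y⟩).1.wt =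
            (1 / 2 ^ n) * (n.choose k.1 : ℝ) * (y.1.1.wt * y.2.1.wt) := by
        rintro ⟨⟨l, hl⟩, ⟨r, hr⟩⟩
        have hs : l.size + r.size = n := by omega
        have : ((rootEquiv n).symm ⟨k, ⟨l, hl⟩, ⟨r, hr⟩⟩).1 = node l r := rfl
        rw [this, wt_node, hs, hl]
      rw [Finset.sum_congr rfl (fun y _ => this y), ← Finset.mul_sum, Fintype.sum_prod_type]
      simp only [← Finset.mul_sum, e2, mul_one, e1]
    rw [Finset.sum_congr rfl (fun k _ => key k), ← Finset.mul_sum,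
      Fin.sum_univ_eq_sum_range (fun k => (n.choose k : ℝ)) (n + 1)]
    have := Nat.sum_range_choose n
    have h2 : ∑ k ∈ Finset.range (n + 1), (n.choose k : ℝ) = 2 ^ n := by exact_mod_cast this
    rw [h2]
    field_simp

end BinTree



/-- For every positive integer `n`,
`∑_{T ∈ B(n)} f^T ∏_{v ∈ T} 1/2^{h_v-1} = 1`. -/
theorem han_formula_rewritten (n : ℕ) (hn : 0 < n) :
    ∑' T : {T : BinTree // T.size = n},
      ((T : BinTree).incLabelings : ℝ) *
        (T : BinTree).hookProd (fun h => 1 / (2 : ℝ) ^ (h - 1)) = 1 := by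
  exact (BinTree.main_aux n).2
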